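/- (Step Lemma) Suppose f:[a,b]→ℝ is measurable, K ⊆ [a,b] is closed, and (a,b)−K = ⊔ₙ (cₙ,dₙ) (a disjoint union of countably many open intervals). Suppose further that f·χ_K is Lebesgue integrable on [a,b], that f·χ_{[cₙ,dₙ]} ∈ Den[a,b] for each n, and that ∑ₙ ω(Fₙ,[cₙ,dₙ]) < ∞ where Fₙ(x) = ∫_{cₙ}^x f (Denjoy integral) on [cₙ,dₙ]. Then f ∈ Den[a,b] and ∫_a^b f = ∫_K f + ∑ₙ ∫_{cₙ}^{dₙ} f. -/

import Mathlib

open MeasureTheory Set Filter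

noncomputable section

attribute [local instance] Classical.propDecidable

/-- The oscillation `ω(F, J)` of `F` on the set `J`. -/
def osc (F : ℝ → ℝ) (J : Set ℝ) : ℝ :=
  sSup {d : ℝ | ∃ x ∈ J, ∃ y ∈ J, d = |F x - F y|}

/-- `D` is a `K`-edged pre-partition of `[a,b]`: a finite nonempty collection of
pairwise non-overlapping closed subintervals of `[a,b]` whose endpoints lie in `K`. -/
def IsPrePartition (a b : ℝ) (K : Set ℝ) (D : Finset (ℝ × ℝ)) : Prop :=
  D.Nonempty ∧
  (∀ p ∈ D, p.1 ≤ p.2 ∧ p.1 ∈ K ∧ p.2 ∈ K ∧ Icc p.1 p.2 ⊆ Icc a b) ∧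
  (D : Set (ℝ × ℝ)).Pairwise fun p q => p.2 ≤ q.1 ∨ q.2 ≤ p.1

/-- `F ∈ AC_*(K)`: absolute continuity in the restricted sense on `K`. -/
def ACStar (a b : ℝ) (F : ℝ → ℝ) (K : Set ℝ) : Prop :=
  ∀ ε > (0:ℝ), ∃ δ > (0:ℝ), ∀ D : Finset (ℝ × ℝ), IsPrePartition a b K D →
    (∑ p ∈ D, (p.2 - p.1)) < δ → (∑ p ∈ D, osc F (Icc p.1 p.2)) < ε

/-- `F ∈ ACG_*(K)`: `K` is a countable union of closed sets `Kₙ ⊆ [a,b]` with `F ∈ AC_*(Kₙ)`. -/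
def ACGStar (a b : ℝ) (F : ℝ → ℝ) (K : Set ℝ) : Prop :=
  ∃ C : ℕ → Set ℝ, (∀ n, IsClosed (C n) ∧ C n ⊆ Icc a b ∧ ACStar a b F (C n)) ∧
    K = ⋃ n, C n

/-- `F` is the indefinite Denjoy integral of `f` on `[a,b]`:
`F` is continuous on `[a,b]`, `F(a) = 0`, `F ∈ ACG_*([a,b])`, and `F' = f` a.e. on `[a,b]`. -/
def HasDenjoyIntegralFn (a b : ℝ) (f F : ℝ → ℝ) : Prop :=
  ContinuousOn F (Icc a b) ∧ F a = 0 ∧ ACGStar a b F (Icc a b) ∧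
    ∀ᵐ x ∂(volume.restrict (Icc a b)), HasDerivAt F (f x) x

/-- `f ∈ Den[a,b]`: `f` is Denjoy integrable on `[a,b]`. -/
def DenjoyIntegrable (a b : ℝ) (f : ℝ → ℝ) : Prop :=
  ∃ F : ℝ → ℝ, HasDenjoyIntegralFn a b f F

/-- The Denjoy integral `∫_a^b f` (junk value `0` if `f` is not Denjoy integrable). -/
def denjoyIntegral (a b : ℝ) (f : ℝ → ℝ) : ℝ :=
  if h : DenjoyIntegrable a b f then Classical.choose h b else 0


lemma osc_nonneg (F : ℝ → ℝ) (J : Set ℝ) : 0 ≤ osc F J := by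
  apply Real.sSup_nonneg
  rintro d ⟨x, -, y, -, rfl⟩
  exact abs_nonneg _

lemma osc_le {F : ℝ → ℝ} {J : Set ℝ} {B : ℝ} (hB : 0 ≤ B)
    (h : ∀ x ∈ J, ∀ y ∈ J, |F x - F y| ≤ B) : osc F J ≤ B := by
  apply Real.sSup_le _ hB
  rintro d ⟨x, hx, y, hy, rfl⟩
  exact h x hx y hy

lemma le_osc {F : ℝ → ℝ} {p q : ℝ} (hF : ContinuousOn F (Icc p q)) {x y : ℝ}
    (hx : x ∈ Icc p q) (hy : y ∈ Icc p q) : |F x - F y| ≤ osc F (Icc p q) := by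
  refine le_csSup (s := {d : ℝ | ∃ x ∈ Icc p q, ∃ y ∈ Icc p q, d = |F x - F y|}) ?_ ⟨x, hx, y, hy, rfl⟩
  obtain ⟨B, hB⟩ := isCompact_Icc.exists_bound_of_continuousOn hF
  refine ⟨B + B, ?_⟩
  rintro d ⟨x, hx, y, hy, rfl⟩
  exact (abs_sub _ _).trans (add_le_add (hB x hx) (hB y hy))

lemma osc_congr {F G : ℝ → ℝ} {J : Set ℝ}
    (h : ∀ x ∈ J, ∀ y ∈ J, F x - F y = G x - G y) : osc F J = osc G J := by
  unfold osc
  congr 1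
  ext d
  constructor
  · rintro ⟨x, hx, y, hy, rfl⟩
    exact ⟨x, hx, y, hy, by rw [h x hx y hy]⟩
  · rintro ⟨x, hx, y, hy, rfl⟩
    exact ⟨x, hx, y, hy, by rw [h x hx y hy]⟩

lemma IsPrePartition.mono {a b a' b' : ℝ} {C C' : Set ℝ} {D : Finset (ℝ × ℝ)}
    (h : IsPrePartition a b C D) (hC : C ⊆ C') (hC' : C ⊆ Icc a' b') :
    IsPrePartition a' b' C' D :=
  ⟨h.1, fun p hp => ⟨(h.2.1 p hp).1, hC (h.2.1 p hp).2.1, hC (h.2.1 p hp).2.2.1,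
    Icc_subset_Icc (hC' (h.2.1 p hp).2.1).1 (hC' (h.2.1 p hp).2.2.1).2⟩, h.2.2⟩

lemma acstar_comb {a b : ℝ} {F G H : ℝ → ℝ} {C C' E : Set ℝ}
    (hF : ContinuousOn F (Icc a b)) (hG : ContinuousOn G (Icc a b))
    (hFC : ACStar a b F C) (hGC : ACStar a b G C') (hE : E ⊆ C) (hE' : E ⊆ C')
    (hEI : E ⊆ Icc a b)
    (hH : ∀ x ∈ Icc a b, ∀ y ∈ Icc a b, |H x - H y| ≤ |F x - F y| + |G x - G y|) :
    ACStar a b H E := by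
  intro ε hε
  obtain ⟨δ₁, h1, h1'⟩ := hFC (ε / 2) (half_pos hε)
  obtain ⟨δ₂, h2, h2'⟩ := hGC (ε / 2) (half_pos hε)
  refine ⟨min δ₁ δ₂, lt_min h1 h2, fun D hD hl => ?_⟩
  have e1 := h1' D (hD.mono hE hEI) (hl.trans_le (min_le_left _ _))
  have e2 := h2' D (hD.mono hE' hEI) (hl.trans_le (min_le_right _ _))
  have : ∑ p ∈ D, osc H (Icc p.1 p.2) ≤
      ∑ p ∈ D, (osc F (Icc p.1 p.2) + osc G (Icc p.1 p.2)) := by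
    apply Finset.sum_le_sum
    intro p hp
    have hs := (hD.2.1 p hp).2.2.2
    apply osc_le (add_nonneg (osc_nonneg _ _) (osc_nonneg _ _))
    intro x hx y hy
    exact (hH x (hs hx) y (hs hy)).trans
      (add_le_add (le_osc (hF.mono hs) hx hy) (le_osc (hG.mono hs) hx hy))
  rw [Finset.sum_add_distrib] at this
  linarith

lemma volume_image_le {F : ℝ → ℝ} {p q : ℝ} (hF : ContinuousOn F (Icc p q)) :
    volume (F '' Icc p q) ≤ ENNReal.ofReal (osc F (Icc p q)) := by
  refine (Real.volume_le_diam _).trans ?_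
  apply Metric.ediam_le_of_forall_dist_le
  rintro _ ⟨x, hx, rfl⟩ _ ⟨y, hy, rfl⟩
  rw [Real.dist_eq]
  exact le_osc hF hx hy

lemma ordc_le {I I' : Set ℝ} (hI : I.OrdConnected) (hI' : I'.OrdConnected)
    (hd : Disjoint I I') {x x' y y' : ℝ} (hx : x ∈ I) (hx' : x' ∈ I') (hxx : x ≤ x')
    (hy : y ∈ I) (hy' : y' ∈ I') : y ≤ y' := by
  by_contra! hlt
  rcases le_or_gt x' y with h | h
  · exact disjoint_left.1 hd (hI.out hx hy ⟨hxx, h⟩) hx'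
  · exact disjoint_left.1 hd hy (hI'.out hy' hx' ⟨hlt.le, h.le⟩)

lemma image_null {a b : ℝ} {F : ℝ → ℝ} {C Z : Set ℝ} (hF : ContinuousOn F (Icc a b))
    (hC : IsClosed C) (hCI : C ⊆ Icc a b) (hAC : ACStar a b F C) (hZ : volume Z = 0) :
    volume (F '' (Z ∩ C)) = 0 := by
  apply le_antisymm _ zero_le
  apply ENNReal.le_of_forall_pos_le_add
  intro ε hε _
  rw [zero_add]
  obtain ⟨δ, hδ, hD⟩ := hAC ε (by exact_mod_cast hε)
  obtain ⟨U, hZU, hU, hUδ⟩ := Z.exists_isOpen_lt_of_lt (μ := volume) (ENNReal.ofReal δ)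
    (by rw [hZ]; exact ENNReal.ofReal_pos.2 hδ)
  let S : Set (Set ℝ) := {I | ∃ x ∈ U ∩ C, I = ordConnectedComponent U x}
  have hSoc : ∀ I ∈ S, I.OrdConnected := by
    rintro I ⟨x, hx, rfl⟩; infer_instance
  have hSo : ∀ I ∈ S, IsOpen I := by
    rintro I ⟨x, hx, rfl⟩
    rw [isOpen_iff_mem_nhds]
    intro y hy
    rw [ordConnectedComponent_eq (mem_ordConnectedComponent.1 hy), ordConnectedComponent_mem_nhds]
    exact hU.mem_nhds (ordConnectedComponent_subset hy)
  have hSU : ∀ I ∈ S, I ⊆ U := by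
    rintro I ⟨x, hx, rfl⟩; exact ordConnectedComponent_subset
  have hSne : ∀ I ∈ S, (I ∩ C).Nonempty := by
    rintro I ⟨x, hx, rfl⟩
    exact ⟨x, self_mem_ordConnectedComponent.2 hx.1, hx.2⟩
  have hSd : S.PairwiseDisjoint id := by
    rintro I ⟨x, hx, rfl⟩ I' ⟨x', hx', rfl⟩ hne
    simp only [Function.onFun, id]
    rw [disjoint_left]
    intro y hy hy'
    apply hne
    rw [ordConnectedComponent_eq (mem_ordConnectedComponent.1 hy),
      ordConnectedComponent_eq (mem_ordConnectedComponent.1 hy')]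
  have hSc : S.Countable := hSd.countable_of_isOpen (fun I hI => hSo I hI)
    (fun I hI => (hSne I hI).mono inter_subset_left)
  have : Countable S := hSc
  let P : Set ℝ → ℝ × ℝ := fun I => (sInf (I ∩ C), sSup (I ∩ C))
  have hbb : ∀ I, BddBelow (I ∩ C) := fun I => ⟨a, fun x hx => (hCI hx.2).1⟩
  have hba : ∀ I, BddAbove (I ∩ C) := fun I => ⟨b, fun x hx => (hCI hx.2).2⟩
  have hP1 : ∀ I ∈ S, (P I).1 ∈ C := fun I hI =>
    closure_minimal inter_subset_right hC (csInf_mem_closure (hSne I hI) (hbb I))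
  have hP2 : ∀ I ∈ S, (P I).2 ∈ C := fun I hI =>
    closure_minimal inter_subset_right hC (csSup_mem_closure (hSne I hI) (hba I))
  have hPm : ∀ I, ∀ x ∈ I ∩ C, x ∈ Icc (P I).1 (P I).2 := fun I x hx =>
    ⟨csInf_le (hbb I) hx, le_csSup (hba I) hx⟩
  have hPle : ∀ I ∈ S, (P I).1 ≤ (P I).2 := fun I hI => by
    obtain ⟨x, hx⟩ := hSne I hI
    exact (hPm I x hx).1.trans (hPm I x hx).2
  have hPsub : ∀ I ∈ S, Icc (P I).1 (P I).2 ⊆ Icc a b := fun I hI =>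
    Icc_subset_Icc (hCI (hP1 I hI)).1 (hCI (hP2 I hI)).2
  have key : ∀ I ∈ S, ∀ I' ∈ S, I ≠ I' → ∀ x ∈ I ∩ C, ∀ x' ∈ I' ∩ C, x ≤ x' →
      (P I).2 ≤ (P I').1 := by
    intro I hI I' hI' hne x hx x' hx' hxx
    apply csSup_le ⟨x, hx⟩
    intro y hy
    apply le_csInf ⟨x', hx'⟩
    intro y' hy'
    exact ordc_le (hSoc I hI) (hSoc I' hI') (hSd hI hI' hne) hx.1 hx'.1 hxx hy.1 hy'.1
  have key2 : ∀ I ∈ S, ∀ I' ∈ S, I ≠ I' → (P I).2 ≤ (P I').1 ∨ (P I').2 ≤ (P I).1 := by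
    intro I hI I' hI' hne
    obtain ⟨x, hx⟩ := hSne I hI
    obtain ⟨x', hx'⟩ := hSne I' hI'
    rcases le_total x x' with h | h
    · exact Or.inl (key I hI I' hI' hne x hx x' hx' h)
    · exact Or.inr (key I' hI' I hI hne.symm x' hx' x hx h)
  have hinj : InjOn P S := by
    intro I hI I' hI' hPP
    by_contra hne
    obtain ⟨x, hx⟩ := hSne I hI
    obtain ⟨x', hx'⟩ := hSne I' hI'
    have m1 := hPm I x hx
    have m2 := hPm I' x' hx'
    rw [hPP] at m1
    have : (P I').2 ≤ (P I').1 := by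
      have := key2 I hI I' hI' hne
      rw [hPP] at this
      simpa using this
    have hxx : x = x' := by linarith [m1.1, m1.2, m2.1, m2.2]
    subst hxx
    exact disjoint_left.1 (hSd hI hI' hne) hx.1 hx'.1
  have hcov : F '' (Z ∩ C) ⊆ ⋃ I : S, F '' Icc (P I).1 (P I).2 := by
    rintro _ ⟨x, hx, rfl⟩
    have hxU : x ∈ U := hZU hx.1
    refine mem_iUnion.2 ⟨⟨ordConnectedComponent U x, x, ⟨hxU, hx.2⟩, rfl⟩, x, ?_, rfl⟩
    exact hPm _ x ⟨self_mem_ordConnectedComponent.2 hxU, hx.2⟩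
  refine (measure_mono hcov).trans ((measure_iUnion_le _).trans ?_)
  refine (ENNReal.tsum_le_tsum (fun I : S => volume_image_le (hF.mono (hPsub I I.2)))).trans ?_
  rw [ENNReal.tsum_eq_iSup_sum]
  refine iSup_le fun T => ?_
  rw [← ENNReal.ofReal_sum_of_nonneg (fun _ _ => osc_nonneg _ _)]
  rcases T.eq_empty_or_nonempty with rfl | hT
  · simp
  have hinj' : Function.Injective (fun I : S => P I) := fun I I' h =>
    Subtype.ext (hinj I.2 I'.2 h)
  have hlen : ∑ I ∈ T, ((P I).2 - (P I).1) < δ := by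
    have h1 : ∀ I ∈ T, ENNReal.ofReal ((P I).2 - (P I).1) ≤ volume (I : Set ℝ) := by
      intro I _
      rw [← Real.volume_Ioo]
      apply measure_mono
      intro y hy
      obtain ⟨u, hu, huy⟩ := exists_lt_of_csInf_lt (hSne I I.2) hy.1
      obtain ⟨v, hv, hvy⟩ := exists_lt_of_lt_csSup (hSne I I.2) hy.2
      exact (hSoc I I.2).out hu.1 hv.1 ⟨huy.le, hvy.le⟩
    have h2 : ENNReal.ofReal (∑ I ∈ T, ((P I).2 - (P I).1)) < ENNReal.ofReal δ := by
      rw [ENNReal.ofReal_sum_of_nonneg (fun (I : S) _ => sub_nonneg.2 (hPle I I.2))]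
      refine ((Finset.sum_le_sum h1).trans ?_).trans_lt hUδ
      rw [← measure_biUnion_finset]
      · exact measure_mono (iUnion₂_subset fun I _ => hSU I I.2)
      · intro I _ I' _ hne
        exact hSd I.2 I'.2 (fun h => hne (Subtype.ext h))
      · intro I _
        exact (hSo I I.2).measurableSet
    exact (ENNReal.ofReal_lt_ofReal_iff hδ).1 h2
  have := hD (T.image fun I : S => P I) ⟨hT.image _, ?_, ?_⟩ ?_
  · rw [Finset.sum_image (fun _ _ _ _ h => hinj' h)] at this
    rw [ENNReal.ofReal_le_iff_le_toReal (by simp)]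
    exact this.le
  · intro p hp
    obtain ⟨I, hI, rfl⟩ := Finset.mem_image.1 hp
    exact ⟨hPle I I.2, hP1 I I.2, hP2 I I.2, hPsub I I.2⟩
  · intro p hp q hq hpq
    obtain ⟨I, hI, rfl⟩ := Finset.mem_image.1 hp
    obtain ⟨I', hI', rfl⟩ := Finset.mem_image.1 hq
    exact key2 I I.2 I' I'.2 (fun h => hpq (by rw [h]))
  · rw [Finset.sum_image (fun _ _ _ _ h => hinj' h)]
    exact hlen

lemma denjoy_unique {a b : ℝ} (hab : a ≤ b) {f F G : ℝ → ℝ}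
    (hF : HasDenjoyIntegralFn a b f F) (hG : HasDenjoyIntegralFn a b f G) : F b = G b := by
  obtain ⟨hFc, hFa, ⟨C, hC, hCu⟩, hFd⟩ := hF
  obtain ⟨hGc, hGa, ⟨C', hC', hCu'⟩, hGd⟩ := hG
  let H : ℝ → ℝ := fun x => F x - G x
  have hHc : ContinuousOn H (Icc a b) := hFc.sub hGc
  have hHd : ∀ᵐ x ∂(volume.restrict (Icc a b)), HasDerivAt H 0 x := by
    filter_upwards [hFd, hGd] with x h1 h2
    have h3 := h1.sub h2
    rw [sub_self] at h3
    exact h3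
  rw [ae_restrict_iff' measurableSet_Icc, ae_iff] at hHd
  set Z := {x | ¬(x ∈ Icc a b → HasDerivAt H 0 x)} with hZ
  have h1 : volume (H '' {x | HasDerivAt H 0 x}) = 0 := by
    apply addHaar_image_eq_zero_of_det_fderivWithin_eq_zero (f' := fun _ => 0) volume
    · intro x hx
      have h' := (show HasDerivAt H 0 x from hx).hasFDerivAt.hasFDerivWithinAt
        (s := {x | HasDerivAt H 0 x})
      have e : ContinuousLinearMap.toSpanSingleton ℝ (0 : ℝ) = 0 := by ext; simp
      exact e ▸ h'
    · intro x hx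
      simp [ContinuousLinearMap.det]
  have h2 : ∀ n m, volume (H '' (Z ∩ (C n ∩ C' m))) = 0 := by
    intro n m
    refine image_null hHc ((hC n).1.inter (hC' m).1) (inter_subset_left.trans (hC n).2.1) ?_ hHd
    refine acstar_comb hFc hGc (hC n).2.2 (hC' m).2.2 inter_subset_left inter_subset_right
      (inter_subset_left.trans (hC n).2.1) ?_
    intro x _ y _
    have : H x - H y = (F x - F y) - (G x - G y) := by simp only [H]; ring
    rw [this]
    exact abs_sub _ _
  have h3 : volume (H '' Icc a b) = 0 := by
    have : H '' Icc a b ⊆ H '' {x | HasDerivAt H 0 x} ∪ ⋃ n, ⋃ m, H '' (Z ∩ (C n ∩ C' m)) := by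
      rintro _ ⟨x, hx, rfl⟩
      by_cases hd : HasDerivAt H 0 x
      · exact Or.inl ⟨x, hd, rfl⟩
      · right
        obtain ⟨n, hn⟩ := mem_iUnion.1 (hCu ▸ hx)
        obtain ⟨m, hm⟩ := mem_iUnion.1 (hCu' ▸ hx)
        exact mem_iUnion₂.2 ⟨n, m, x, ⟨by simp only [hZ, mem_ofPred_eq]; tauto, hn, hm⟩, rfl⟩
    apply measure_mono_null this
    exact measure_union_null h1 (measure_iUnion_null fun n => measure_iUnion_null fun m => h2 n m)
  have hHa : H a = 0 := by simp [H, hFa, hGa]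
  have h4 : uIcc (H a) (H b) ⊆ H '' Icc a b := by
    have := intermediate_value_uIcc (f := H) (a := a) (b := b) (by rwa [uIcc_of_le hab])
    rwa [uIcc_of_le hab] at this
  have h5 := measure_mono_null h4 h3
  rw [Real.volume_interval, ENNReal.ofReal_eq_zero, hHa] at h5
  have : H b = 0 := by simpa using h5
  simp only [H] at this
  linarith

lemma HasDenjoyIntegralFn.restrict {a b x : ℝ} {f F : ℝ → ℝ} (h : HasDenjoyIntegralFn a b f F)
    (hx : x ∈ Icc a b) : HasDenjoyIntegralFn a x f F := by
  obtain ⟨hFc, hFa, ⟨C, hC, hCu⟩, hFd⟩ := h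
  have hs : Icc a x ⊆ Icc a b := Icc_subset_Icc_right hx.2
  refine ⟨hFc.mono hs, hFa, ⟨fun n => C n ∩ Icc a x, fun n =>
    ⟨(hC n).1.inter isClosed_Icc, inter_subset_right, ?_⟩, ?_⟩,
    ae_restrict_of_ae_restrict_of_subset hs hFd⟩
  · intro ε hε
    obtain ⟨δ, hδ, h⟩ := (hC n).2.2 ε hε
    exact ⟨δ, hδ, fun D hD => h D (hD.mono inter_subset_left (inter_subset_right.trans hs))⟩
  · rw [← iUnion_inter, ← hCu, inter_eq_right.2 hs]

lemma HasDenjoyIntegralFn.integral_eq {a b : ℝ} (hab : a ≤ b) {f F : ℝ → ℝ}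
    (h : HasDenjoyIntegralFn a b f F) : denjoyIntegral a b f = F b := by
  have hd : DenjoyIntegrable a b f := ⟨F, h⟩
  unfold denjoyIntegral
  rw [dif_pos hd]
  exact denjoy_unique hab (Classical.choose_spec hd) h

lemma acstar_primitive {a b : ℝ} {g : ℝ → ℝ} (hg : Integrable g) (C : Set ℝ) :
    ACStar a b (fun x => ∫ t in a..x, g t) C := by
  intro ε hε
  have hfin : ∫⁻ x, ‖g x‖ₑ ≠ ⊤ := hg.2.ne
  obtain ⟨δ, hδ, h⟩ := exists_pos_setLIntegral_lt_of_measure_lt hfin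
    (ε := ENNReal.ofReal ε) (by simpa using hε)
  have hδ' : (min δ 1) ≠ ⊤ := (min_lt_of_right_lt ENNReal.one_lt_top).ne
  refine ⟨(min δ 1).toReal, ENNReal.toReal_pos (by simp [hδ.ne']) hδ', fun D hD hl => ?_⟩
  have hdis : (D : Set (ℝ × ℝ)).Pairwise (Function.onFun Disjoint fun p => Ioc p.1 p.2) := by
    intro p hp q hq hne
    simp only [Function.onFun]
    rw [disjoint_left]
    intro x hx hx'
    rcases hD.2.2 hp hq hne with h | h
    · linarith [hx.2, hx'.1]
    · linarith [hx.1, hx'.2]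
  have h1 : ∑ p ∈ D, osc (fun x => ∫ t in a..x, g t) (Icc p.1 p.2) ≤
      ∑ p ∈ D, ∫ t in Ioc p.1 p.2, ‖g t‖ := by
    apply Finset.sum_le_sum
    intro p hp
    apply osc_le (integral_nonneg fun _ => norm_nonneg _)
    intro x hx y hy
    rw [intervalIntegral.integral_interval_sub_left hg.intervalIntegrable hg.intervalIntegrable]
    rw [← Real.norm_eq_abs]
    refine (intervalIntegral.norm_integral_le_integral_norm_uIoc (f := g)).trans ?_
    apply setIntegral_mono_set hg.norm.integrableOn (ae_of_all _ fun _ => norm_nonneg _)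
    apply HasSubset.Subset.eventuallyLE
    exact Ioc_subset_Ioc (le_min hy.1 hx.1) (max_le hy.2 hx.2)
  refine h1.trans_lt ?_
  rw [← integral_biUnion_finset D (fun _ _ => measurableSet_Ioc) hdis
    (fun _ _ => hg.norm.integrableOn)]
  have h2 := h (⋃ p ∈ D, Ioc p.1 p.2) ?_
  · rw [← ofReal_integral_norm_eq_lintegral_enorm hg.integrableOn] at h2
    exact (ENNReal.ofReal_lt_ofReal_iff hε).1 h2
  · rw [measure_biUnion_finset hdis (fun _ _ => measurableSet_Ioc)]
    simp only [Real.volume_Ioc]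
    rw [← ENNReal.ofReal_sum_of_nonneg (fun p hp => sub_nonneg.2 (hD.2.1 p hp).1)]
    refine lt_of_lt_of_le ?_ (min_le_left δ 1)
    rwa [ENNReal.ofReal_lt_iff_lt_toReal _ hδ']
    exact Finset.sum_nonneg (fun p hp => sub_nonneg.2 (hD.2.1 p hp).1)

/-- `F` on `[c, d]` extended by constants. -/
def clampFn (c d : ℝ) (F : ℝ → ℝ) (x : ℝ) : ℝ := F (max c (min x d))

section steps

variable {c d w : ℕ → ℝ} {Φ : ℕ → ℝ → ℝ}

lemma clamp_mem {c d : ℝ} (h : c ≤ d) (x : ℝ) : max c (min x d) ∈ Icc c d :=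
  ⟨le_max_left _ _, max_le h (min_le_right _ _)⟩

lemma clampFn_of_mem {c d x : ℝ} (F : ℝ → ℝ) (h : x ∈ Icc c d) : clampFn c d F x = F x := by
  unfold clampFn
  rw [min_eq_left h.2, max_eq_right h.1]

lemma clampFn_of_le {c d x : ℝ} (F : ℝ → ℝ) (h : x ≤ c) : clampFn c d F x = F c := by
  unfold clampFn
  rw [max_eq_left (min_le_of_left_le h)]

lemma clampFn_of_ge {c d x : ℝ} (F : ℝ → ℝ) (hcd : c ≤ d) (h : d ≤ x) :
    clampFn c d F x = F d := by
  unfold clampFn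
  rw [min_eq_right h, max_eq_right hcd]

lemma clampFn_const {c d x y : ℝ} (F : ℝ → ℝ) (hcd : c ≤ d)
    (h : (x ≤ c ∧ y ≤ c) ∨ (d ≤ x ∧ d ≤ y) ∨ d ≤ c) : clampFn c d F x = clampFn c d F y := by
  rcases h with h | h | h
  · rw [clampFn_of_le F h.1, clampFn_of_le F h.2]
  · rw [clampFn_of_ge F hcd h.1, clampFn_of_ge F hcd h.2]
  · have h1 := clamp_mem hcd x
    have h2 := clamp_mem hcd y
    unfold clampFn
    congr 1
    linarith [h1.1, h1.2, h2.1, h2.2]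

lemma clampFn_continuous {c d : ℝ} {F : ℝ → ℝ} (hcd : c ≤ d) (hF : ContinuousOn F (Icc c d)) :
    Continuous (clampFn c d F) :=
  hF.comp_continuous (by fun_prop) (clamp_mem hcd)

lemma clampFn_osc {c d W : ℝ} {F : ℝ → ℝ} (hcd : c ≤ d)
    (hF : ∀ x ∈ Icc c d, ∀ y ∈ Icc c d, |F x - F y| ≤ W) (x y : ℝ) :
    |clampFn c d F x - clampFn c d F y| ≤ W :=
  hF _ (clamp_mem hcd x) _ (clamp_mem hcd y)

lemma clampFn_bound {c d W : ℝ} {F : ℝ → ℝ} (hcd : c ≤ d)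
    (hF : ∀ x ∈ Icc c d, ∀ y ∈ Icc c d, |F x - F y| ≤ W) (h0 : F c = 0) (x : ℝ) :
    |clampFn c d F x| ≤ W := by
  have := hF _ (clamp_mem hcd x) c ⟨le_rfl, hcd⟩
  rwa [h0, sub_zero] at this

/-- The sum of the clamped functions. -/
def stepSum (c d : ℕ → ℝ) (Φ : ℕ → ℝ → ℝ) (x : ℝ) : ℝ := ∑' n, clampFn (c n) (d n) (Φ n) x

lemma stepSum_summable (hcd : ∀ n, c n ≤ d n) (hw : Summable w)
    (hΦ : ∀ n, ∀ x ∈ Icc (c n) (d n), ∀ y ∈ Icc (c n) (d n), |Φ n x - Φ n y| ≤ w n)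
    (h0 : ∀ n, Φ n (c n) = 0) (x : ℝ) : Summable fun n => clampFn (c n) (d n) (Φ n) x :=
  Summable.of_norm_bounded hw (fun n => clampFn_bound (hcd n) (hΦ n) (h0 n) x)

lemma stepSum_continuous (hcd : ∀ n, c n ≤ d n) (hw : Summable w)
    (hΦ : ∀ n, ∀ x ∈ Icc (c n) (d n), ∀ y ∈ Icc (c n) (d n), |Φ n x - Φ n y| ≤ w n)
    (h0 : ∀ n, Φ n (c n) = 0) (hc : ∀ n, ContinuousOn (Φ n) (Icc (c n) (d n))) :
    Continuous (stepSum c d Φ) :=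
  continuous_tsum (fun n => clampFn_continuous (hcd n) (hc n)) hw
    (fun n x => clampFn_bound (hcd n) (hΦ n) (h0 n) x)

lemma stepSum_sub_summable (hcd : ∀ n, c n ≤ d n) (hw : Summable w)
    (hΦ : ∀ n, ∀ x ∈ Icc (c n) (d n), ∀ y ∈ Icc (c n) (d n), |Φ n x - Φ n y| ≤ w n) (x y : ℝ) :
    Summable fun n => |clampFn (c n) (d n) (Φ n) x - clampFn (c n) (d n) (Φ n) y| :=
  Summable.of_nonneg_of_le (fun _ => abs_nonneg _)
    (fun n => clampFn_osc (hcd n) (hΦ n) x y) hw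

lemma stepSum_sub_le (hcd : ∀ n, c n ≤ d n) (hw : Summable w)
    (hΦ : ∀ n, ∀ x ∈ Icc (c n) (d n), ∀ y ∈ Icc (c n) (d n), |Φ n x - Φ n y| ≤ w n)
    (h0 : ∀ n, Φ n (c n) = 0) (x y : ℝ) :
    |stepSum c d Φ x - stepSum c d Φ y| ≤
      ∑' n, |clampFn (c n) (d n) (Φ n) x - clampFn (c n) (d n) (Φ n) y| := by
  unfold stepSum
  rw [← (stepSum_summable hcd hw hΦ h0 x).tsum_sub (stepSum_summable hcd hw hΦ h0 y)]
  have h := norm_tsum_le_tsum_norm (f := fun n => clampFn (c n) (d n) (Φ n) x -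
    clampFn (c n) (d n) (Φ n) y)
    (by simpa only [Real.norm_eq_abs] using stepSum_sub_summable hcd hw hΦ x y)
  simpa only [Real.norm_eq_abs] using h

lemma stepSum_on_gap (hcd : ∀ n, c n ≤ d n) (hw : Summable w)
    (hdisj : Pairwise fun m n => Disjoint (Ioo (c m) (d m)) (Ioo (c n) (d n)))
    (hΦ : ∀ n, ∀ x ∈ Icc (c n) (d n), ∀ y ∈ Icc (c n) (d n), |Φ n x - Φ n y| ≤ w n)
    (h0 : ∀ n, Φ n (c n) = 0) {n : ℕ} (hn : c n < d n) {x y : ℝ} (hx : x ∈ Icc (c n) (d n))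
    (hy : y ∈ Icc (c n) (d n)) :
    stepSum c d Φ x - stepSum c d Φ y = Φ n x - Φ n y := by
  unfold stepSum
  rw [← (stepSum_summable hcd hw hΦ h0 x).tsum_sub (stepSum_summable hcd hw hΦ h0 y),
    tsum_eq_single n, clampFn_of_mem _ hx, clampFn_of_mem _ hy]
  intro m hm
  rw [sub_eq_zero]
  apply clampFn_const _ (hcd m)
  have : Disjoint (Ioo (c m) (d m)) (Ioo (c n) (d n)) := hdisj hm
  rw [Ioo_disjoint_Ioo] at this
  obtain ⟨x1, x2⟩ := hx
  obtain ⟨y1, y2⟩ := hy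
  grind

lemma exists_gap_bound (N : Finset ℕ) :
    ∃ δ > 0, ∀ n ∈ N, c n < d n → δ ≤ d n - c n := by
  induction N using Finset.induction_on with
  | empty => exact ⟨1, one_pos, by simp⟩
  | insert m N _ ih =>
    obtain ⟨δ, hδ, h⟩ := ih
    by_cases hm : c m < d m
    · refine ⟨min δ (d m - c m), lt_min hδ (sub_pos.2 hm), fun n hn hlt => ?_⟩
      rcases Finset.mem_insert.1 hn with rfl | hn
      · exact min_le_right _ _
      · exact (min_le_left _ _).trans (h n hn hlt)
    · refine ⟨δ, hδ, fun n hn hlt => ?_⟩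
      rcases Finset.mem_insert.1 hn with rfl | hn
      · exact absurd hlt hm
      · exact h n hn hlt

lemma stepSum_acstar {a b : ℝ} (hcd : ∀ n, c n ≤ d n) (hw : Summable w) (hw0 : ∀ n, 0 ≤ w n)
    (hΦ : ∀ n, ∀ x ∈ Icc (c n) (d n), ∀ y ∈ Icc (c n) (d n), |Φ n x - Φ n y| ≤ w n)
    (h0 : ∀ n, Φ n (c n) = 0) {C : Set ℝ} (hC : ∀ x ∈ C, ∀ n, x ∉ Ioo (c n) (d n)) :
    ACStar a b (stepSum c d Φ) C := by
  intro ε hε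
  obtain ⟨N, hN⟩ := ((tendsto_tsum_compl_atTop_zero w).eventually_lt_const hε).exists
  obtain ⟨δ, hδ, hgap⟩ := exists_gap_bound (c := c) (d := d) N
  refine ⟨δ, hδ, fun D hD hl => ?_⟩
  let v : ℕ → ℝ := {n | n ∉ N}.indicator w
  have hv : ∑' n, v n < ε := by
    have := tsum_subtype {n | n ∉ N} w
    rw [← this]
    exact hN
  have hv0 : ∀ n, 0 ≤ v n := fun n => indicator_nonneg (fun n _ => hw0 n) n
  have hvs : Summable v := hw.indicator _
  let u : ℝ × ℝ → ℕ → ℝ := fun p n =>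
    if c n < d n ∧ p.1 ≤ c n ∧ d n ≤ p.2 then w n else 0
  have hu0 : ∀ p n, 0 ≤ u p n := by
    intro p n
    simp only [u]
    split_ifs
    · exact hw0 n
    · exact le_rfl
  have huw : ∀ p n, u p n ≤ w n := by
    intro p n
    simp only [u]
    split_ifs
    · exact le_rfl
    · exact hw0 n
  have hus : ∀ p, Summable (u p) := fun p => Summable.of_nonneg_of_le (hu0 p) (huw p) hw
  have h1 : ∀ p ∈ D, osc (stepSum c d Φ) (Icc p.1 p.2) ≤ ∑' n, u p n := by
    intro p hp
    obtain ⟨hle, hp1, hp2, -⟩ := hD.2.1 p hp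
    apply osc_le (tsum_nonneg (hu0 p))
    intro x hx y hy
    refine (stepSum_sub_le hcd hw hΦ h0 x y).trans ?_
    refine (stepSum_sub_summable hcd hw hΦ x y).tsum_le_tsum (fun n => ?_) (hus p)
    simp only [u]
    split_ifs with hcond
    · exact clampFn_osc (hcd n) (hΦ n) x y
    · rw [clampFn_const (Φ n) (hcd n) (x := x) (y := y), sub_self, abs_zero]
      have e1 := hC _ hp1 n
      have e2 := hC _ hp2 n
      obtain ⟨x1, x2⟩ := hx
      obtain ⟨y1, y2⟩ := hy
      simp only [mem_Ioo, not_and, not_lt] at e1 e2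
      grind
  have h2 : ∀ n, ∑ p ∈ D, u p n ≤ v n := by
    intro n
    by_cases hex : ∃ p ∈ D, c n < d n ∧ p.1 ≤ c n ∧ d n ≤ p.2
    · obtain ⟨p, hp, hlt, hpc, hpd⟩ := hex
      have hnN : n ∉ N := by
        intro hn
        have := hgap n hn hlt
        have h3 := Finset.single_le_sum (f := fun p : ℝ × ℝ => p.2 - p.1)
          (fun q hq => sub_nonneg.2 (hD.2.1 q hq).1) hp
        linarith
      have hvn : v n = w n := indicator_of_mem (s := {n | n ∉ N}) hnN w
      rw [hvn, Finset.sum_eq_single_of_mem p hp]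
      · exact huw p n
      · intro q hq hne
        simp only [u]
        rw [if_neg]
        rintro ⟨-, h4, h5⟩
        rcases hD.2.2 hq hp hne with h | h <;> linarith
    · rw [Finset.sum_eq_zero]
      · exact hv0 n
      · intro p hp
        simp only [u]
        rw [if_neg]
        intro h
        exact hex ⟨p, hp, h⟩
  calc ∑ p ∈ D, osc (stepSum c d Φ) (Icc p.1 p.2) ≤ ∑ p ∈ D, ∑' n, u p n :=
        Finset.sum_le_sum h1
    _ = ∑' n, ∑ p ∈ D, u p n := (Summable.tsum_finsetSum fun p _ => hus p).symm
    _ ≤ ∑' n, v n := (summable_sum fun p _ => hus p).tsum_le_tsum h2 hvs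
    _ < ε := hv

lemma stepSum_deriv (hcd : ∀ n, c n ≤ d n) (hw : Summable w) (hw0 : ∀ n, 0 ≤ w n)
    (hΦ : ∀ n, ∀ x ∈ Icc (c n) (d n), ∀ y ∈ Icc (c n) (d n), |Φ n x - Φ n y| ≤ w n)
    (h0 : ∀ n, Φ n (c n) = 0) :
    ∀ᵐ x : ℝ, (∀ n, x ∉ Ioo (c n) (d n)) → HasDerivAt (stepSum c d Φ) 0 x := by
  let ρ : Measure ℝ := Measure.sum fun n =>
    ENNReal.ofReal (w n) • (Measure.dirac (c n) + Measure.dirac (d n))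
  have hfin : IsFiniteMeasure ρ := by
    constructor
    have : ∑' n, ENNReal.ofReal (w n) < ⊤ := hw.tsum_ofReal_lt_top
    simp only [ρ, Measure.sum_apply _ MeasurableSet.univ, Measure.smul_apply, Measure.add_apply,
      measure_univ, smul_eq_mul]
    rw [ENNReal.tsum_mul_right]
    exact ENNReal.mul_lt_top this (by norm_num)
  have hsing : ρ.MutuallySingular volume := by
    rw [Measure.MutuallySingular.sum_left]
    intro n
    apply Measure.MutuallySingular.smul
    exact (mutuallySingular_dirac (c n) volume).add_left (mutuallySingular_dirac (d n) volume)
  filter_upwards [Besicovitch.ae_tendsto_rnDeriv ρ volume, hsing.rnDeriv_ae_eq_zero]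
    with x hx hx0 hxn
  rw [hx0] at hx
  have hbound : ∀ y, ENNReal.ofReal |stepSum c d Φ y - stepSum c d Φ x| ≤
      ρ (Metric.closedBall x |y - x|) := by
    intro y
    refine (ENNReal.ofReal_le_ofReal (stepSum_sub_le hcd hw hΦ h0 y x)).trans ?_
    rw [ENNReal.ofReal_tsum_of_nonneg (fun _ => abs_nonneg _)
      (stepSum_sub_summable hcd hw hΦ y x)]
    simp only [ρ, Measure.sum_apply _ Metric.isClosed_closedBall.measurableSet]
    refine ENNReal.tsum_le_tsum fun n => ?_
    by_cases hcon : clampFn (c n) (d n) (Φ n) y = clampFn (c n) (d n) (Φ n) x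
    · rw [hcon]; simp
    · refine (ENNReal.ofReal_le_ofReal (clampFn_osc (hcd n) (hΦ n) y x)).trans ?_
      have hxn' := hxn n
      have hcc := fun h => hcon (clampFn_const (Φ n) (hcd n) (x := y) (y := x) h)
      have hmem : c n ∈ Metric.closedBall x |y - x| ∨ d n ∈ Metric.closedBall x |y - x| := by
        simp only [Metric.mem_closedBall, Real.dist_eq]
        simp only [mem_Ioo, not_and, not_lt] at hxn'
        grind
      simp only [Measure.smul_apply, Measure.add_apply, smul_eq_mul]
      have : 1 ≤ (Measure.dirac (c n)) (Metric.closedBall x |y - x|) +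
          (Measure.dirac (d n)) (Metric.closedBall x |y - x|) := by
        rcases hmem with h | h
        · rw [Measure.dirac_apply_of_mem h]; exact le_self_add
        · rw [Measure.dirac_apply_of_mem h]; exact le_add_self
      calc ENNReal.ofReal (w n) = ENNReal.ofReal (w n) * 1 := (mul_one _).symm
        _ ≤ _ := by gcongr
  rw [hasDerivAt_iff_isLittleO, Asymptotics.isLittleO_iff]
  intro η hη
  have hev := hx.eventually_lt_const (u := ENNReal.ofReal (η / 2)) (by simpa using hη)
  rw [eventually_nhdsWithin_iff, Metric.eventually_nhds_iff] at hev
  obtain ⟨r, hr, hev⟩ := hev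
  rw [Metric.eventually_nhds_iff]
  refine ⟨r, hr, fun y hy => ?_⟩
  simp only [smul_zero, sub_zero, Real.norm_eq_abs]
  rcases eq_or_ne y x with rfl | hne
  · simp
  have hpos : 0 < |y - x| := abs_pos.2 (sub_ne_zero.2 hne)
  have h3 := hev (y := |y - x|) (by simpa [Real.dist_eq] using hy) hpos
  rw [Real.volume_closedBall] at h3
  have h4 := (ENNReal.div_le_iff (ENNReal.ofReal_pos.2 (by positivity)).ne' ENNReal.ofReal_ne_top).1 h3.le
  have h5 := (hbound y).trans h4
  rw [← ENNReal.ofReal_mul (by positivity)] at h5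
  have h6 := (ENNReal.ofReal_le_ofReal_iff (by positivity)).1 h5
  linarith

end steps

lemma acgstar_of_countable {ι : Type} [Countable ι] [Nonempty ι] {a b : ℝ} {F : ℝ → ℝ} {K : Set ℝ}
    (C : ι → Set ℝ) (h : ∀ i, IsClosed (C i) ∧ C i ⊆ Icc a b ∧ ACStar a b F (C i))
    (hK : K = ⋃ i, C i) : ACGStar a b F K := by
  obtain ⟨e, he⟩ := exists_surjective_nat ι
  exact ⟨fun n => C (e n), fun n => h (e n), by rw [hK, he.iUnion_comp]⟩

/-- The Step Lemma. -/
theorem step_lemma (a b : ℝ) (hab : a < b) (f : ℝ → ℝ) (hf : Measurable f)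
    (K : Set ℝ) (hK : IsClosed K) (hKsub : K ⊆ Icc a b)
    (c d : ℕ → ℝ) (hcd : ∀ n, c n ≤ d n)
    (hdisj : Pairwise fun m n => Disjoint (Ioo (c m) (d m)) (Ioo (c n) (d n)))
    (hunion : (⋃ n, Ioo (c n) (d n)) = Ioo a b \ K)
    (hint : IntegrableOn f K volume)
    (hden : ∀ n, DenjoyIntegrable (c n) (d n) f)
    (hsum : Summable fun n => osc (fun x => denjoyIntegral (c n) x f) (Icc (c n) (d n))) :
    DenjoyIntegrable a b f ∧
    denjoyIntegral a b f = (∫ x in K, f x) + ∑' n, denjoyIntegral (c n) (d n) f := by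
  choose Φ hΦ using hden
  have hosc : ∀ n, osc (fun x => denjoyIntegral (c n) x f) (Icc (c n) (d n)) =
      osc (Φ n) (Icc (c n) (d n)) := by
    intro n
    apply osc_congr
    intro x hx y hy
    rw [((hΦ n).restrict hx).integral_eq hx.1, ((hΦ n).restrict hy).integral_eq hy.1]
  simp only [hosc] at hsum
  set w : ℕ → ℝ := fun n => osc (Φ n) (Icc (c n) (d n)) with hwdef
  have hw0 : ∀ n, 0 ≤ w n := fun n => osc_nonneg _ _
  have hΦw : ∀ n, ∀ x ∈ Icc (c n) (d n), ∀ y ∈ Icc (c n) (d n), |Φ n x - Φ n y| ≤ w n :=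
    fun n x hx y hy => le_osc (hΦ n).1 hx hy
  have hΦ0 : ∀ n, Φ n (c n) = 0 := fun n => (hΦ n).2.1
  have hsubI : ∀ n, c n < d n → a ≤ c n ∧ d n ≤ b := by
    intro n hn
    have : Ioo (c n) (d n) ⊆ Ioo a b := fun x hx =>
      (hunion ▸ (mem_iUnion.2 ⟨n, hx⟩ : x ∈ ⋃ n, Ioo (c n) (d n)) : x ∈ Ioo a b \ K).1
    exact (Ioo_subset_Ioo_iff hn).1 this
  have hKn : ∀ x ∈ K ∪ {a, b}, ∀ n, x ∉ Ioo (c n) (d n) := by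
    intro x hx n hxn
    have h1 : x ∈ Ioo a b \ K := hunion ▸ mem_iUnion.2 ⟨n, hxn⟩
    rcases hx with hx | rfl | rfl
    · exact h1.2 hx
    · exact lt_irrefl _ h1.1.1
    · exact lt_irrefl _ h1.1.2
  let g : ℝ → ℝ := K.indicator f
  have hg : Integrable g := (integrable_indicator_iff hK.measurableSet).2 hint
  let L : ℝ → ℝ := fun x => ∫ t in a..x, g t
  have hLc : Continuous L := intervalIntegral.continuous_primitive
    (fun _ _ => hg.intervalIntegrable) a
  let S : ℝ → ℝ := stepSum c d Φ
  have hSc : Continuous S := stepSum_continuous hcd hsum hΦw hΦ0 (fun n => (hΦ n).1)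
  let F : ℝ → ℝ := fun x => L x + S x
  have hFgap : ∀ n, c n < d n → ∀ x ∈ Icc (c n) (d n), ∀ y ∈ Icc (c n) (d n),
      F x - F y = Φ n x - Φ n y := by
    intro n hn x hx y hy
    have h1 : L x - L y = 0 := by
      simp only [L]
      rw [intervalIntegral.integral_interval_sub_left hg.intervalIntegrable hg.intervalIntegrable]
      apply intervalIntegral.integral_zero_ae
      have hne : ∀ᵐ t : ℝ, t ≠ d n := by simp [ae_iff, measure_singleton]
      filter_upwards [hne] with t ht htm
      apply indicator_of_notMem
      intro htK
      refine hKn t (Or.inl htK) n ⟨?_, ?_⟩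
      · exact (le_min hy.1 hx.1).trans_lt htm.1
      · exact lt_of_le_of_ne (htm.2.trans (max_le hy.2 hx.2)) ht
    have h2 := stepSum_on_gap hcd hsum hdisj hΦw hΦ0 hn hx hy
    have : F x - F y = (L x - L y) + (stepSum c d Φ x - stepSum c d Φ y) := by
      simp only [F, S]; ring
    rw [this, h1, h2, zero_add]
  have hFa : F a = 0 := by
    have h1 : L a = 0 := by simp [L]
    have h2 : S a = 0 := by
      simp only [S, stepSum]
      have : ∀ n, clampFn (c n) (d n) (Φ n) a = 0 := by
        intro n
        rw [← hΦ0 n, ← clampFn_of_le (Φ n) (le_refl (c n)) (d := d n)]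
        apply clampFn_const _ (hcd n)
        rcases lt_or_ge (c n) (d n) with h | h
        · exact Or.inl ⟨(hsubI n h).1, le_rfl⟩
        · exact Or.inr (Or.inr h)
      simp [this]
    simp [F, h1, h2]
  have hFb : F b = (∫ x in K, f x) + ∑' n, denjoyIntegral (c n) (d n) f := by
    have h1 : L b = ∫ x in K, f x := by
      simp only [L, g]
      rw [intervalIntegral.integral_of_le hab.le, ← integral_Icc_eq_integral_Ioc,
        setIntegral_indicator hK.measurableSet, inter_eq_right.2 hKsub]
    have h2 : S b = ∑' n, denjoyIntegral (c n) (d n) f := by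
      simp only [S, stepSum]
      congr 1
      ext n
      rw [(hΦ n).integral_eq (hcd n), ← clampFn_of_ge (Φ n) (hcd n) (le_refl (d n))]
      apply clampFn_const _ (hcd n)
      rcases lt_or_ge (c n) (d n) with h | h
      · exact Or.inr (Or.inl ⟨(hsubI n h).2, le_rfl⟩)
      · exact Or.inr (Or.inr h)
    simp only [F, h1, h2]
  have hACK : ACStar a b F (K ∪ {a, b}) := by
    refine acstar_comb hLc.continuousOn hSc.continuousOn (acstar_primitive hg (K ∪ {a, b}))
      (stepSum_acstar hcd hsum hw0 hΦw hΦ0 hKn) subset_rfl subset_rfl ?_ ?_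
    · refine union_subset hKsub ?_
      rintro x (rfl | rfl)
      · exact ⟨le_rfl, hab.le⟩
      · exact ⟨hab.le, le_rfl⟩
    · intro x _ y _
      have : F x - F y = (L x - L y) + (S x - S y) := by simp only [F]; ring
      rw [this]
      exact abs_add_le _ _
  choose C hC hCu using fun n => (hΦ n).2.2.1
  let E : Option (ℕ × ℕ) → Set ℝ := fun o => match o with
    | none => K ∪ {a, b}
    | some p => if c p.1 < d p.1 then C p.1 p.2 else ∅
  have hACG : ACGStar a b F (Icc a b) := by
    have hE : ∀ i, IsClosed (E i) ∧ E i ⊆ Icc a b ∧ ACStar a b F (E i) := by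
      rintro (_ | ⟨n, m⟩)
      · refine ⟨hK.union (Set.toFinite _).isClosed, union_subset hKsub ?_, hACK⟩
        rintro x (rfl | rfl)
        · exact ⟨le_rfl, hab.le⟩
        · exact ⟨hab.le, le_rfl⟩
      · by_cases hn : c n < d n
        · have hEe : E (some (n, m)) = C n m := if_pos hn
          rw [hEe]
          have hsub : C n m ⊆ Icc a b := ((hC n m).2.1).trans
            (Icc_subset_Icc (hsubI n hn).1 (hsubI n hn).2)
          refine ⟨(hC n m).1, hsub, ?_⟩
          intro ε hε
          obtain ⟨δ, hδ, h⟩ := (hC n m).2.2 ε hε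
          refine ⟨δ, hδ, fun D hD hl => ?_⟩
          have hD' := hD.mono (a' := c n) (b' := d n) (Subset.refl _) (hC n m).2.1
          have := h D hD' hl
          rw [Finset.sum_congr rfl fun p hp => osc_congr (F := F) (G := Φ n) fun x hx y hy =>
            hFgap n hn x ((hD'.2.1 p hp).2.2.2 hx) y ((hD'.2.1 p hp).2.2.2 hy)]
          exact this
        · have hEe : E (some (n, m)) = ∅ := if_neg hn
          rw [hEe]
          refine ⟨isClosed_empty, empty_subset _, ?_⟩
          intro ε hε
          refine ⟨1, one_pos, fun D hD _ => ?_⟩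
          obtain ⟨p, hp⟩ := hD.1
          exact absurd (hD.2.1 p hp).2.1 (notMem_empty _)
    refine acgstar_of_countable E hE ?_
    apply Subset.antisymm
    · intro x hx
      by_cases hxK : x ∈ K ∪ {a, b}
      · exact mem_iUnion.2 ⟨none, hxK⟩
      · have hxm : x ∈ ⋃ n, Ioo (c n) (d n) := by
          rw [hunion]
          simp only [mem_union, mem_insert_iff, mem_singleton_iff, not_or] at hxK
          exact ⟨⟨lt_of_le_of_ne hx.1 (Ne.symm hxK.2.1), lt_of_le_of_ne hx.2 hxK.2.2⟩, hxK.1⟩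
        obtain ⟨n, hn⟩ := mem_iUnion.1 hxm
        have hlt := hn.1.trans hn.2
        obtain ⟨m, hm⟩ := mem_iUnion.1 (hCu n ▸ Ioo_subset_Icc_self hn : x ∈ ⋃ m, C n m)
        refine mem_iUnion.2 ⟨some (n, m), ?_⟩
        have hEe : E (some (n, m)) = C n m := if_pos hlt
        rw [hEe]
        exact hm
    · exact iUnion_subset fun i => (hE i).2.1
  have hderiv : ∀ᵐ x ∂(volume.restrict (Icc a b)), HasDerivAt F (f x) x := by
    rw [ae_restrict_iff' measurableSet_Icc]
    have hna : ∀ᵐ t : ℝ, t ≠ a := by simp [ae_iff, measure_singleton]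
    have hnb : ∀ᵐ t : ℝ, t ≠ b := by simp [ae_iff, measure_singleton]
    have hΦd : ∀ᵐ x : ℝ, ∀ n, x ∈ Icc (c n) (d n) → HasDerivAt (Φ n) (f x) x := by
      rw [ae_all_iff]
      intro n
      exact (ae_restrict_iff' measurableSet_Icc).1 (hΦ n).2.2.2
    filter_upwards [hna, hnb, hΦd, stepSum_deriv hcd hsum hw0 hΦw hΦ0,
      LocallyIntegrable.ae_hasDerivAt_integral hg.locallyIntegrable] with x hxa hxb hxΦ hxS hxL hx
    by_cases hxK : x ∈ K
    · have h1 := hxL a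
      have h2 := hxS (hKn x (Or.inl hxK))
      have h3 : g x = f x := indicator_of_mem hxK f
      rw [h3] at h1
      have h4 := h1.add h2
      rw [add_zero] at h4
      exact h4
    · have hxm : x ∈ ⋃ n, Ioo (c n) (d n) := by
        rw [hunion]
        exact ⟨⟨lt_of_le_of_ne hx.1 (Ne.symm hxa), lt_of_le_of_ne hx.2 hxb⟩, hxK⟩
      obtain ⟨n, hn⟩ := mem_iUnion.1 hxm
      have hlt := hn.1.trans hn.2
      have h1 := (hxΦ n (Ioo_subset_Icc_self hn)).add_const (F x - Φ n x)
      refine h1.congr_of_eventuallyEq ?_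
      filter_upwards [Ioo_mem_nhds hn.1 hn.2] with y hy
      have := hFgap n hlt y (Ioo_subset_Icc_self hy) x (Ioo_subset_Icc_self hn)
      linarith
  have hF : HasDenjoyIntegralFn a b f F :=
    ⟨(hLc.add hSc).continuousOn, hFa, hACG, hderiv⟩
  exact ⟨⟨F, hF⟩, by rw [hF.integral_eq hab.le, hFb]⟩
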